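/- arXiv:2603.04344 — 2 statements merged into one kernel-verified Lean document; each statement's English description precedes it below -/
import Mathlib

section
/- For every integer D ≥ 4 there exists a directed edge e of the Kautz digraph K(2,D) with cong(e) > τ(2,D). -/
/-!
Fix an edge of `K(2,D)` with word `w = w_0 … w_D`. A walk of `k` edges having it as edge number
`s + 1` is a word `l w r` of length `D + k` with distinct adjacent letters, where `l` has `s` and `r`
has `k - 1 - s` letters; there are `2 ^ (k - 1)` of these. The walk is a geodesic unless, for some
`1 ≤ q ≤ k`, the word satisfies `z_i = z_{i+q}` for `k - q ≤ i < D` (`dist_eq_of_walk`). Such an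
overlap is impossible if it fails inside `w`, and otherwise it determines the letters of `l` and `r`
that it reaches, which gives the bound `bad D w k s q` on the number of extensions lost
(`card_bad_le`, `N_lower`). Since `∑ k * 2 ^ (k - 1) = τ(2,D) + (D - 3) * 2 ^ (D - 2) + 1`, it
suffices to find `w` with `∑ bad ≤ (D - 3) * 2 ^ (D - 2)` (`exists_of_totalBad_lt`).

The word used is `capWord D`: a factor of the squarefree ternary Thue–Morse word whose two end
letters are altered so that the first four and the last four letters do not recur inside it
(`capWord_interior`, `capWord_prefix`, `capWord_suffix`). Then extensions are lost only if the edge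
has number at least `D - 2` on the walk, counted from the start or from the end, which costs at
most `17 * 2 ^ (D - 2)` either way, or if `q ≥ D - 3`, where the loss is at most `64` for each triple
`(k, s, q)`. Altogether this is at most `35 * 2 ^ (D - 2)` once `D ≥ 38`
(`totalBad_capWord_le`). For `4 ≤ D ≤ 37` the sum is evaluated for explicit words
(`smallCode_test`).
-/

open scoped BigOperators Classical

namespace Kautz

/-- A vertex of the Kautz digraph `K(d,D)`: a word of length `D` over the
alphabet `{0,1,…,d}` in which adjacent letters are distinct. -/
structure Vertex (d D : ℕ) where
  word : List (Fin (d+1))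
  length_eq : word.length = D
  chain : word.Chain' (· ≠ ·)

/-- Adjacency in `K(d,D)`: there is an edge `u → v` iff some word `w` of length
`D+1` with adjacent letters distinct has `u` as its prefix of length `D` and
`v` as its suffix of length `D`. -/
def Adj {d D : ℕ} (u v : Vertex d D) : Prop :=
  ∃ w : List (Fin (d+1)), w.length = D + 1 ∧ w.Chain' (· ≠ ·) ∧
    u.word = w.dropLast ∧ v.word = w.tail

/-- A directed edge of `K(d,D)`. -/
structure Edge (d D : ℕ) where
  src : Vertex d D
  tgt : Vertex d D
  adj : Adj src tgt

/-- The edge-word `w(e) = a₀a₁⋯a_D` of an edge `e : u → v`, namely `u`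
followed by the last letter of `v`. -/
def Edge.word {d D : ℕ} (e : Edge d D) : List (Fin (d+1)) :=
  e.src.word ++ e.tgt.word.drop (D - 1)

/-- `p` is a walk from `x` to `y`, recorded as the list of successive vertices. -/
def IsWalk {d D : ℕ} (p : List (Vertex d D)) (x y : Vertex d D) : Prop :=
  p.head? = some x ∧ p.getLast? = some y ∧ p.Chain' Adj

/-- Directed graph distance in `K(d,D)`. -/
noncomputable def dist {d D : ℕ} (x y : Vertex d D) : ℕ :=
  sInf {k | ∃ p : List (Vertex d D), IsWalk p x y ∧ p.length = k + 1}

/-- `N(e;k,t)`: the number of ordered pairs `(x,y)` with `dist x y = k` such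
that some geodesic (walk of length `k = dist x y`) from `x` to `y` uses `e` as
its `t`-th edge. -/
noncomputable def N {d D : ℕ} (e : Edge d D) (k t : ℕ) : ℕ :=
  Set.ncard {xy : Vertex d D × Vertex d D |
    dist xy.1 xy.2 = k ∧
    ∃ p : List (Vertex d D), IsWalk p xy.1 xy.2 ∧ p.length = k + 1 ∧
      p[t-1]? = some e.src ∧ p[t]? = some e.tgt}

/-- `U_k(e) = ∑_{t=1}^{k} N(e;k,t)`. -/
noncomputable def U {d D : ℕ} (e : Edge d D) (k : ℕ) : ℕ :=
  ∑ t ∈ Finset.Icc 1 k, N e k t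

/-- `cong(e) = ∑_{k=1}^{D} U_k(e)`. -/
noncomputable def cong {d D : ℕ} (e : Edge d D) : ℕ :=
  ∑ k ∈ Finset.Icc 1 D, U e k

/-- `τ(d,D) = (D−1)·d^{D−2} + D·d^{D−1}`. -/
def tau (d D : ℕ) : ℕ := (D - 1) * d ^ (D - 2) + D * d ^ (D - 1)

/-- A word has a border: some proper nonempty prefix equals the suffix of the
same length. -/
def HasBorder {α : Type*} (w : List α) : Prop :=
  ∃ ℓ, 1 ≤ ℓ ∧ ℓ ≤ w.length - 1 ∧ w.take ℓ = w.drop (w.length - ℓ)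

/-- An unbordered word. -/
def Unbordered {α : Type*} (w : List α) : Prop := ¬ HasBorder w

/-- A square-free word: no nonempty factor of the form `XX`. -/
def SquareFree {α : Type*} (w : List α) : Prop :=
  ¬ ∃ X : List α, X ≠ [] ∧ (X ++ X) <:+: w

/-- A `7/4⁺`-power-free word: no factor `x^k y` with `x` nonempty, `k ≥ 1`,
`y` a prefix of `x`, and `(k·|x| + |y|)/|x| > 7/4`. -/
def SevenFourthsPlusFree {α : Type*} (w : List α) : Prop :=
  ¬ ∃ (x y : List α) (k : ℕ), x ≠ [] ∧ 1 ≤ k ∧ y <+: x ∧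
    ((List.replicate k x).flatten ++ y) <:+: w ∧
    7 * x.length < 4 * (k * x.length + y.length)

/-- A word over `{0,1,…,d}` is ternary if it uses only the letters `{0,1,2}`. -/
def IsTernary {n : ℕ} (w : List (Fin n)) : Prop := ∀ a ∈ w, (a : ℕ) < 3

/-- The suffix of `w` of length `t`. -/
def suffixWord {α : Type*} (w : List α) (t : ℕ) : List α := w.drop (w.length - t)

/-- `R_t(w)`: the set of admissible overlap lengths `r` at position `t`, i.e.
those `r` with `t+1 ≤ r ≤ |w|−t−1` such that `w = A·B·V·B` where `B` is the
suffix of `w` of length `t`, `V` is nonempty, and `|B·V| = r`. -/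
noncomputable def Rt {α : Type*} (w : List α) (t : ℕ) : Finset ℕ :=
  (Finset.Icc (t + 1) (w.length - t - 1)).filter fun r =>
    ∃ A V : List α, V ≠ [] ∧
      w = A ++ suffixWord w t ++ V ++ suffixWord w t ∧ t + V.length = r

/-- The deficit `Δ_t(e) = d^{D−1} − N(e;D,t)`. -/
noncomputable def deficit {d D : ℕ} (e : Edge d D) (t : ℕ) : ℝ :=
  (d : ℝ) ^ (D - 1) - (N e D t : ℝ)

/-- The total deficit `Δ(e) = ∑_{t=1}^{D} Δ_t(e)`. -/
noncomputable def totalDeficit {d D : ℕ} (e : Edge d D) : ℝ :=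
  ∑ t ∈ Finset.Icc 1 D, deficit e t

/-- The weighted overlap count
`Ω_d(e) = ∑_{j=1}^{⌈(D+1)/2⌉} ∑_{r ∈ R_j(w(e))} d^{−(r−j)}`. -/
noncomputable def Omega {d D : ℕ} (e : Edge d D) : ℝ :=
  ∑ j ∈ Finset.Icc 1 ((D + 2) / 2), ∑ r ∈ Rt e.word j, (d : ℝ) ^ ((j : ℤ) - (r : ℤ))

/-- The overlap `ov(u,v)`: the largest `j ≤ D` such that the last `j` letters
of `u` equal the first `j` letters of `v`. -/
noncomputable def ov {d D : ℕ} (u v : Vertex d D) : ℕ :=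
  sSup {j | j ≤ D ∧ u.word.drop (D - j) = v.word.take j}

end Kautz

namespace Kautz

/-! ### The Thue–Morse sequence -/

/-- The parity of the number of binary ones of `n`; the first argument is the recursion depth,
which only has to be at least `n`. -/
def tmAux : ℕ → ℕ → Bool
  | 0, _ => false
  | f + 1, n => if n = 0 then false else xor (n % 2 == 1) (tmAux f (n / 2))

/-- The Thue–Morse sequence. -/
def tm (n : ℕ) : Bool := tmAux n n

lemma tmAux_fuel (f g n : ℕ) (hf : n ≤ f) (hg : n ≤ g) : tmAux f n = tmAux g n := by
  induction f generalizing g n with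
  | zero =>
    obtain rfl : n = 0 := by omega
    cases g <;> simp [tmAux]
  | succ f ih =>
    cases g with
    | zero =>
      obtain rfl : n = 0 := by omega
      simp [tmAux]
    | succ g =>
      by_cases hn : n = 0
      · simp [tmAux, hn]
      · simp only [tmAux, hn, if_false]
        rw [ih g (n / 2) (by omega) (by omega)]

lemma tm_step (n : ℕ) : tm n = xor (n % 2 == 1) (tm (n / 2)) := by
  cases n with
  | zero => simp [tm, tmAux]
  | succ n =>
    have : tm (n + 1) = xor ((n + 1) % 2 == 1) (tmAux n ((n + 1) / 2)) := by
      simp [tm, tmAux]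
    rw [this, tm, tmAux_fuel n ((n + 1) / 2) _ (by omega) le_rfl]

lemma tm_even (n : ℕ) : tm (2 * n) = tm n := by
  rw [tm_step]
  have h : 2 * n % 2 = 0 := by omega
  have h' : 2 * n / 2 = n := by omega
  simp [h, h']

lemma tm_odd (n : ℕ) : tm (2 * n + 1) = !tm n := by
  rw [tm_step]
  have h : (2 * n + 1) % 2 = 1 := by omega
  have h' : (2 * n + 1) / 2 = n := by omega
  simp [h, h']

lemma tm_ne_succ {n : ℕ} (h : n % 2 = 0) : tm n ≠ tm (n + 1) := by
  obtain ⟨a, rfl⟩ : ∃ a, n = 2 * a := ⟨n / 2, by omega⟩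
  rw [tm_even, tm_odd]
  simp

lemma tm_no_cube (a : ℕ) (h : tm a = tm (a + 1)) (h' : tm (a + 1) = tm (a + 2)) : False := by
  rcases Nat.mod_two_eq_zero_or_one a with ha | ha
  · exact tm_ne_succ ha h
  · exact tm_ne_succ (n := a + 1) (by omega) h'

/-- The Thue–Morse sequence contains no factor of length `2p + 1` with period `p`. An even period
is halved; an odd one `p ≥ 3` forces the sequence to alternate along `2p` steps, and halving the
even positions then gives three equal consecutive letters. -/
lemma tm_overlap_free (p i : ℕ) (hp : 1 ≤ p) (h : ∀ j ≤ p, tm (i + j) = tm (i + j + p)) :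
    False := by
  induction p using Nat.strong_induction_on generalizing i with
  | _ p ih =>
  rcases Nat.mod_two_eq_zero_or_one p with he | ho
  · obtain ⟨r, rfl⟩ : ∃ r, p = 2 * r := ⟨p / 2, by omega⟩
    refine ih r (by omega) (i / 2) (by omega) fun j hj => ?_
    have h1 := h (2 * j) (by omega)
    rcases Nat.mod_two_eq_zero_or_one i with hi | hi
    · rw [show i + 2 * j = 2 * (i / 2 + j) by omega,
        show 2 * (i / 2 + j) + 2 * r = 2 * (i / 2 + j + r) by omega, tm_even, tm_even] at h1
      exact h1
    · rw [show i + 2 * j = 2 * (i / 2 + j) + 1 by omega,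
        show 2 * (i / 2 + j) + 1 + 2 * r = 2 * (i / 2 + j + r) + 1 by omega,
        tm_odd, tm_odd] at h1
      simpa using h1
  · by_cases hp1 : p = 1
    · subst hp1
      exact tm_no_cube i (h 0 (by omega)) (h 1 (by omega))
    -- an odd period transports the alternation at even positions to odd positions
    have alt1 : ∀ j < p, tm (i + j) ≠ tm (i + j + 1) ∧ tm (i + j + p) ≠ tm (i + j + p + 1) := by
      intro j hj
      have e1 := h j hj.le
      have e2 := h (j + 1) hj
      rw [show i + (j + 1) = i + j + 1 by omega, show i + j + 1 + p = i + j + p + 1 by omega] at e2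
      rcases Nat.mod_two_eq_zero_or_one (i + j) with hij | hij
      · have := tm_ne_succ hij
        exact ⟨this, by rwa [← e1, ← e2]⟩
      · have := tm_ne_succ (n := i + j + p) (by omega)
        exact ⟨by rwa [e1, e2], this⟩
    have alt : ∀ j < 2 * p, tm (i + j) ≠ tm (i + j + 1) := by
      intro j hj
      by_cases hjp : j < p
      · exact (alt1 j hjp).1
      · have := (alt1 (j - p) (by omega)).2
        rwa [show i + (j - p) + p = i + j by omega] at this
    have two : ∀ j, j + 1 < 2 * p → tm (i + j) = tm (i + j + 2) := by
      intro j hj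
      have a1 := alt j (by omega)
      have a2 := alt (j + 1) hj
      rw [show i + (j + 1) = i + j + 1 by omega, show i + j + 1 + 1 = i + j + 2 by omega] at a2
      revert a1 a2
      cases tm (i + j) <;> cases tm (i + j + 1) <;> cases tm (i + j + 2) <;> simp
    have h1 := two (i % 2) (by omega)
    have h2 := two (i % 2 + 2) (by omega)
    obtain ⟨a, ha⟩ : ∃ a, i + i % 2 = 2 * a := ⟨(i + i % 2) / 2, by omega⟩
    rw [ha, show 2 * a + 2 = 2 * (a + 1) by omega, tm_even, tm_even] at h1
    rw [show i + (i % 2 + 2) = 2 * (a + 1) by omega,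
      show 2 * (a + 1) + 2 = 2 * (a + 2) by omega, tm_even, tm_even] at h2
    exact tm_no_cube a h1 h2

/-! ### The ternary Thue–Morse word -/

/-- The ternary Thue–Morse word: `1` where `tm` repeats, `0` and `2` where it falls and rises. -/
def vtm (n : ℕ) : Fin 3 :=
  if tm n = tm (n + 1) then 1 else if tm n = true then 0 else 2

lemma vtm_eq_one_iff (n : ℕ) : vtm n = 1 ↔ tm n = tm (n + 1) := by
  unfold vtm
  cases tm n <;> cases tm (n + 1) <;> simp

lemma vtm_eq_cases {n m : ℕ} (h : vtm n = vtm m) :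
    (tm n = tm (n + 1) ∧ tm m = tm (m + 1)) ∨ (tm n = tm m ∧ tm (n + 1) = tm (m + 1)) := by
  unfold vtm at h
  revert h
  cases tm n <;> cases tm (n + 1) <;> cases tm m <;> cases tm (m + 1) <;> simp

/-- A square of period `p` in `vtm` would give a factor of `tm` of length `2p + 1` and period `p`:
either the two halves start with the same letter of `tm`, or all the letters of the two halves
are `1` and `tm` is constant, hence again equal, across both. -/
lemma vtm_squarefree (i p : ℕ) (hp : 1 ≤ p) (h : ∀ j < p, vtm (i + j) = vtm (i + j + p)) :
    False := by
  have h0 : tm i = tm (i + p) := by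
    by_contra hne
    -- otherwise every letter of the square is `1`, so `tm` is constant on it
    have key : ∀ j ≤ p, tm (i + j) = tm i ∧ tm (i + j + p) = tm (i + p) := by
      intro j
      induction j with
      | zero => simp
      | succ j ih =>
        intro hj
        obtain ⟨e1, e2⟩ := ih (by omega)
        rw [show i + (j + 1) = i + j + 1 by omega, show i + j + 1 + p = i + j + p + 1 by omega]
        rcases vtm_eq_cases (h j (by omega)) with ⟨a, b⟩ | ⟨a, b⟩
        · exact ⟨a.symm.trans e1, b.symm.trans e2⟩
        · exact absurd (e1.symm.trans (a.trans e2)) hne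
    exact hne (key p le_rfl).1.symm
  -- the equality of `tm` at the two starting points propagates along the square
  refine tm_overlap_free p i hp fun j => ?_
  induction j with
  | zero => exact fun _ => h0
  | succ j ih =>
    intro hj
    have e := ih (by omega)
    rw [show i + (j + 1) = i + j + 1 by omega, show i + j + 1 + p = i + j + p + 1 by omega]
    rcases vtm_eq_cases (h j (by omega)) with ⟨a, b⟩ | ⟨a, b⟩
    · exact a.symm.trans (e.trans b)
    · exact b

lemma vtm_ne_succ (n : ℕ) : vtm n ≠ vtm (n + 1) := fun h =>
  vtm_squarefree n 1 le_rfl fun j hj => by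
    obtain rfl : j = 0 := by omega
    exact h

/-- Of the words `x1x` with `x ≠ 1`, none is a factor of `vtm`. -/
lemma vtm_no_x1x {n : ℕ} (h0 : vtm n ≠ 1) (h1 : vtm (n + 1) = 1) (h2 : vtm (n + 2) = vtm n) :
    False := by
  rw [Ne, vtm_eq_one_iff] at h0
  rw [vtm_eq_one_iff] at h1
  rcases vtm_eq_cases h2 with ⟨-, b⟩ | ⟨a, -⟩
  · exact h0 b
  · exact h0 (a.symm.trans h1.symm)

lemma odd_of_vtm_eq_one {n : ℕ} (h : vtm n = 1) : n % 2 = 1 := by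
  rw [vtm_eq_one_iff] at h
  rcases Nat.mod_two_eq_zero_or_one n with hn | hn
  · exact absurd h (tm_ne_succ hn)
  · exact hn

/-- The letters `1` occupy only odd positions, and of two consecutive odd positions at least one
carries a `1`. -/
lemma vtm_one_of_odd {n : ℕ} (hn : n % 2 = 1) (h : vtm (n + 2) ≠ 1) : vtm n = 1 := by
  obtain ⟨a, rfl⟩ : ∃ a, n = 2 * a + 1 := ⟨n / 2, by omega⟩
  rw [Ne, vtm_eq_one_iff, show 2 * a + 1 + 2 = 2 * (a + 1) + 1 by omega,
    show 2 * (a + 1) + 1 + 1 = 2 * (a + 2) by omega, tm_odd, tm_even] at h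
  rw [vtm_eq_one_iff, show 2 * a + 1 + 1 = 2 * (a + 1) by omega, tm_odd, tm_even]
  have e : tm (a + 1) = tm (a + 2) := by
    revert h
    cases tm (a + 1) <;> cases tm (a + 2) <;> simp
  have ha : a % 2 = 0 := by
    by_contra ha
    exact tm_ne_succ (n := a + 1) (by omega) e
  have := tm_ne_succ ha
  revert this
  cases tm a <;> cases tm (a + 1) <;> simp

/-! ### The edge word -/

/-- The edge word `w_0 … w_D`: a factor of `vtm` with both end letters altered, so that the first
four and the last four letters do not recur. The first letter is replaced by the third; the
last makes the word end in `x1x`, or in `1yz1`, which is not a factor of `vtm` because the letters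
`1` of `vtm` are at odd positions. The shift by `D % 2` makes `D % 2 + D` even, so that the fourth
letter from the end is indeed a `1` in the second case. -/
def capWord (D : ℕ) (i : ℕ) : Fin 3 :=
  if i = 0 then vtm (D % 2 + 2)
  else if i = D then (if vtm (D % 2 + (D - 1)) = 1 then vtm (D % 2 + (D - 2)) else 1)
  else vtm (D % 2 + i)

lemma capWord_mid {D i : ℕ} (h0 : 1 ≤ i) (hD : i < D) : capWord D i = vtm (D % 2 + i) := by
  simp [capWord, show i ≠ 0 by omega, show i ≠ D by omega]

lemma capWord_zero (D : ℕ) : capWord D 0 = vtm (D % 2 + 2) := by simp [capWord]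

lemma capWord_last {D : ℕ} (hD : 1 ≤ D) : capWord D D =
    if vtm (D % 2 + (D - 1)) = 1 then vtm (D % 2 + (D - 2)) else 1 := by
  simp [capWord, show D ≠ 0 by omega]

lemma capWord_chain {D : ℕ} (hD : 4 ≤ D) (i : ℕ) (hi : i < D) :
    capWord D i ≠ capWord D (i + 1) := by
  by_cases h0 : i = 0
  · subst h0
    rw [capWord_zero, capWord_mid (by omega) (by omega)]
    exact (vtm_ne_succ (D % 2 + 1)).symm
  rw [capWord_mid (by omega) hi]
  by_cases h1 : i + 1 = D
  · rw [h1, capWord_last (by omega), show i = D - 1 by omega]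
    split_ifs with h
    · have := vtm_ne_succ (D % 2 + (D - 2))
      rw [show D % 2 + (D - 2) + 1 = D % 2 + (D - 1) by omega] at this
      exact this.symm
    · exact h
  · rw [capWord_mid (by omega) (by omega)]
    exact vtm_ne_succ _

/-- Squares avoiding both end letters do not occur. -/
lemma capWord_interior {D : ℕ} (i q : ℕ) (hi : 1 ≤ i) (hq : 1 ≤ q) (h : i + 2 * q ≤ D)
    (hw : ∀ j < q, capWord D (i + j) = capWord D (i + j + q)) : False :=
  vtm_squarefree (D % 2 + i) q hq fun j hj => by
    have := hw j hj
    rwa [capWord_mid (by omega) (by omega), capWord_mid (by omega) (by omega), ← add_assoc,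
      ← add_assoc, ← add_assoc] at this

/-- The first four letters do not recur before the last letter. -/
lemma capWord_prefix {D : ℕ} (q : ℕ) (hq : 1 ≤ q) (hD : q + 4 ≤ D)
    (hw : ∀ i < 4, capWord D i = capWord D (i + q)) : False := by
  have h0 := hw 0 (by omega)
  have h1 := hw 1 (by omega)
  have h2 := hw 2 (by omega)
  have h3 := hw 3 (by omega)
  rw [capWord_zero, capWord_mid (by omega) (by omega)] at h0
  rw [capWord_mid (by omega) (by omega), capWord_mid (by omega) (by omega)] at h1 h2 h3
  rcases Nat.mod_two_eq_zero_or_one D with hm | hm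
  · rw [hm] at h0 h1 h2
    simp only [zero_add] at h0 h1 h2
    have v1 : vtm 1 = 1 := by decide
    have v2 : vtm 2 ≠ 1 := by decide
    refine vtm_no_x1x (n := q) (h0 ▸ v2) ?_ ?_
    · rw [add_comm q 1, ← h1, v1]
    · rw [add_comm q 2, ← h2, h0]
  · rw [hm] at h0 h1 h2 h3
    have v : vtm 4 = vtm 2 := by decide
    refine vtm_squarefree (1 + q) 2 (by omega) fun j hj => ?_
    interval_cases j
    · rw [show 1 + q + 0 + 2 = 1 + (2 + q) by omega, ← h2, show 1 + q + 0 = 1 + (0 + q) by omega,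
        ← h0]
    · rw [show 1 + q + 1 + 2 = 1 + (3 + q) by omega, ← h3, show 1 + q + 1 = 1 + (1 + q) by omega,
        ← h1]
      exact v.symm

/-- The last four letters do not occur earlier, except possibly at the first position. -/
lemma capWord_suffix {D : ℕ} (q : ℕ) (hq : 1 ≤ q) (hD : q + 4 ≤ D)
    (hw : ∀ i < 4, capWord D (D - 3 - q + i) = capWord D (D - 3 - q + i + q)) : False := by
  obtain ⟨c, rfl⟩ : ∃ c, D = c + q + 3 := ⟨D - 3 - q, by omega⟩
  rw [show c + q + 3 - 3 - q = c by omega] at hw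
  set D := c + q + 3 with hDdef
  have h0 := hw 0 (by omega)
  have h1 := hw 1 (by omega)
  have h2 := hw 2 (by omega)
  have h3 := hw 3 (by omega)
  rw [show c + 3 + q = D by omega, capWord_last (by omega),
    capWord_mid (by omega) (by omega)] at h3
  rw [capWord_mid (by omega) (by omega), capWord_mid (by omega) (by omega)] at h0 h1 h2
  rw [show D % 2 + (c + 0 + q) = D % 2 + (D - 3) by omega] at h0
  rw [show D % 2 + (c + 1 + q) = D % 2 + (D - 2) by omega] at h1
  rw [show D % 2 + (c + 2 + q) = D % 2 + (D - 1) by omega] at h2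
  split_ifs at h3 with h
  · have hne := vtm_ne_succ (D % 2 + (c + 1))
    rw [show D % 2 + (c + 1) + 1 = D % 2 + (c + 2) by omega, h2, h] at hne
    refine vtm_no_x1x (n := D % 2 + (c + 1)) hne (h2.trans h) ?_
    rw [show D % 2 + (c + 1) + 2 = D % 2 + (c + 3) by omega, h3, h1]
  · have e := vtm_one_of_odd (n := D % 2 + (D - 3)) (by omega)
      (by rwa [show D % 2 + (D - 3) + 2 = D % 2 + (D - 1) by omega])
    have o1 := odd_of_vtm_eq_one (h0.trans e)
    have o2 := odd_of_vtm_eq_one h3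
    omega

/-! ### Extensions of a word -/

/-- The words `l` of length `n` for which `a :: l` has distinct adjacent letters. -/
def exts : ℕ → Fin 3 → Finset (List (Fin 3))
  | 0, _ => {[]}
  | n + 1, a => (Finset.univ.filter (· ≠ a)).biUnion fun b => (exts n b).image (b :: ·)

lemma mem_exts_succ {n : ℕ} {a : Fin 3} {l : List (Fin 3)} :
    l ∈ exts (n + 1) a ↔ ∃ b, b ≠ a ∧ ∃ l' ∈ exts n b, b :: l' = l := by
  simp [exts]

lemma card_exts (n : ℕ) (a : Fin 3) : (exts n a).card = 2 ^ n := by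
  induction n generalizing a with
  | zero => simp [exts]
  | succ n ih =>
    rw [exts, Finset.card_biUnion]
    · simp_rw [Finset.card_image_of_injective _ (List.cons_injective), ih]
      rw [Finset.sum_const, pow_succ, mul_comm, smul_eq_mul]
      congr 1
      rw [Finset.filter_ne' , Finset.card_erase_of_mem (Finset.mem_univ _)]
      simp
    · intro b _ c _ hbc
      rw [Function.onFun, Finset.disjoint_left]
      intro l hl hl'
      simp only [Finset.mem_image] at hl hl'
      obtain ⟨x, -, rfl⟩ := hl
      obtain ⟨y, -, hy⟩ := hl'
      exact hbc (List.cons.inj hy).1.symm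

lemma length_of_mem_exts {n : ℕ} {a : Fin 3} {l : List (Fin 3)} (h : l ∈ exts n a) :
    l.length = n := by
  induction n generalizing a l with
  | zero => simp_all [exts]
  | succ n ih =>
    obtain ⟨b, -, l', hl', rfl⟩ := mem_exts_succ.1 h
    simp [ih hl']

lemma exts_head {n : ℕ} {a : Fin 3} {l : List (Fin 3)} (h : l ∈ exts n a) (hn : 0 < n) :
    l.getD 0 0 ≠ a := by
  cases n with
  | zero => omega
  | succ n =>
    obtain ⟨b, hb, l', hl', rfl⟩ := mem_exts_succ.1 h
    simpa using hb

lemma exts_chain {n : ℕ} {a : Fin 3} {l : List (Fin 3)} (h : l ∈ exts n a) (i : ℕ)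
    (hi : i + 1 < n) : l.getD i 0 ≠ l.getD (i + 1) 0 := by
  induction n generalizing a l i with
  | zero => omega
  | succ n ih =>
    obtain ⟨b, -, l', hl', rfl⟩ := mem_exts_succ.1 h
    cases i with
    | zero =>
      have := exts_head hl' (by omega)
      simpa using this.symm
    | succ i =>
      have := ih hl' i (by omega)
      simpa using this

/-- Prescribing the first `m` letters divides the count by at least `2 ^ m`. -/
lemma card_exts_prescribed (n m : ℕ) (hm : m ≤ n) (a : Fin 3) (f : ℕ → Fin 3) :
    ((exts n a).filter fun l => ∀ i < m, l.getD i 0 = f i).card ≤ 2 ^ (n - m) := by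
  induction n generalizing m a f with
  | zero => exact (Finset.card_filter_le _ _).trans (by simp [exts])
  | succ n ih =>
    cases m with
    | zero => exact (Finset.card_filter_le _ _).trans (by rw [card_exts]; rfl)
    | succ m =>
      rw [Nat.add_sub_add_right]
      refine le_trans ?_ (ih m (by omega) (f 0) fun i => f (i + 1))
      rw [← Finset.card_image_of_injective ((exts n (f 0)).filter _)
        (List.cons_injective (a := f 0))]
      refine Finset.card_le_card fun l hl => ?_
      obtain ⟨hl, hp⟩ := Finset.mem_filter.1 hl
      obtain ⟨b, -, l', hl', rfl⟩ := mem_exts_succ.1 hl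
      have hb : b = f 0 := by simpa using hp 0 (by omega)
      subst hb
      refine Finset.mem_image_of_mem _ (Finset.mem_filter.2 ⟨hl', fun i hi => ?_⟩)
      simpa using hp (i + 1) (by omega)

/-- The word `l.reverse ++ w_0 … w_D ++ r` for `l` of length `s`, as a function of the position
(`0` beyond the end). -/
def glue (D s : ℕ) (w : ℕ → Fin 3) (l r : List (Fin 3)) (i : ℕ) : Fin 3 :=
  if i < s then l.getD (s - 1 - i) 0
  else if i ≤ s + D then w (i - s)
  else r.getD (i - (s + D + 1)) 0

lemma glue_left {D s : ℕ} {w : ℕ → Fin 3} {l r : List (Fin 3)} {i : ℕ} (h : i < s) :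
    glue D s w l r i = l.getD (s - 1 - i) 0 := by simp [glue, h]

lemma glue_mid {D s : ℕ} {w : ℕ → Fin 3} {l r : List (Fin 3)} {i : ℕ} (h : i ≤ D) :
    glue D s w l r (s + i) = w i := by simp [glue, h]

lemma glue_right {D s : ℕ} {w : ℕ → Fin 3} {l r : List (Fin 3)} {i : ℕ} :
    glue D s w l r (s + D + 1 + i) = r.getD i 0 := by
  simp [glue, show ¬ (s + D + 1 + i < s) by omega, show ¬ (s + D + 1 + i ≤ s + D) by omega]

lemma glue_chain {D k s : ℕ} {w : ℕ → Fin 3} {l r : List (Fin 3)} (hs : s < k)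
    (hw : ∀ i < D, w i ≠ w (i + 1)) (hl : l ∈ exts s (w 0)) (hr : r ∈ exts (k - 1 - s) (w D))
    (i : ℕ) (hi : i + 1 < D + k) : glue D s w l r i ≠ glue D s w l r (i + 1) := by
  rcases lt_trichotomy (i + 1) s with h | h | h
  · rw [glue_left (by omega), glue_left h]
    have := exts_chain hl (s - 1 - (i + 1)) (by omega)
    rw [show s - 1 - (i + 1) + 1 = s - 1 - i by omega] at this
    exact this.symm
  · rw [glue_left (by omega), show i + 1 = s + 0 by omega, glue_mid (by omega),
      show s - 1 - i = 0 by omega]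
    exact exts_head hl (by omega)
  · obtain ⟨j, rfl⟩ : ∃ j, i = s + j := ⟨i - s, by omega⟩
    rcases lt_trichotomy j D with h | h | h
    · rw [add_assoc, glue_mid h.le, glue_mid (by omega)]
      exact hw j h
    · subst h
      rw [glue_mid le_rfl, show s + j + 1 = s + j + 1 + 0 by omega, glue_right]
      exact (exts_head hr (by omega)).symm
    · obtain ⟨c, rfl⟩ : ∃ c, j = D + 1 + c := ⟨j - (D + 1), by omega⟩
      rw [show s + (D + 1 + c) = s + D + 1 + c by omega,
        show s + D + 1 + c + 1 = s + D + 1 + (c + 1) by omega, glue_right, glue_right]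
      exact exts_chain hr c (by omega)

/-! ### Walks and distances -/

/-- The vertex `z_j … z_{j+D-1}`. -/
def window (D : ℕ) (z : ℕ → Fin 3) (j : ℕ)
    (h : ∀ i, i + 1 < D → z (j + i) ≠ z (j + i + 1)) : Vertex 2 D where
  word := List.ofFn fun i : Fin D => z (j + i)
  length_eq := by simp
  chain := by
    refine List.isChain_iff_getElem.2 fun i hi => ?_
    simp only [List.length_ofFn] at hi
    simpa [add_assoc] using h i hi

lemma window_getElem? {D : ℕ} {z : ℕ → Fin 3} {j : ℕ}
    {h : ∀ i, i + 1 < D → z (j + i) ≠ z (j + i + 1)} {i : ℕ} (hi : i < D) :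
    (window D z j h).word[i]? = some (z (j + i)) := by
  simp [window, hi]

lemma adj_window {D j j' : ℕ} {z : ℕ → Fin 3} (hj : j' = j + 1)
    (h : ∀ i, i + 1 < D → z (j + i) ≠ z (j + i + 1))
    (h' : ∀ i, i + 1 < D → z (j' + i) ≠ z (j' + i + 1))
    (hz : ∀ i, i < D → z (j + i) ≠ z (j + i + 1)) :
    Adj (window D z j h) (window D z j' h') := by
  subst hj
  refine ⟨List.ofFn fun i : Fin (D + 1) => z (j + i), by simp, ?_, ?_, ?_⟩
  · refine List.isChain_iff_getElem.2 fun i hi => ?_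
    simp only [List.length_ofFn] at hi
    simp only [List.getElem_ofFn]
    exact hz i (by omega)
  · apply List.ext_getElem
    · simp [window]
    · intro i _ _
      simp only [window, List.getElem_dropLast, List.getElem_ofFn]
  · apply List.ext_getElem
    · simp [window]
    · intro i _ _
      simp [window, add_assoc, add_comm 1 i]

lemma Vertex.ext_getElem? {d D : ℕ} {x y : Vertex d D} (h : ∀ i < D, x.word[i]? = y.word[i]?) :
    x = y := by
  have : x.word = y.word := by
    apply List.ext_getElem?
    intro i
    by_cases hi : i < D
    · exact h i hi
    · rw [List.getElem?_eq_none (by rw [x.length_eq]; omega),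
        List.getElem?_eq_none (by rw [y.length_eq]; omega)]
  cases x
  cases y
  simpa using this

instance {d D : ℕ} : Finite (Vertex d D) := by
  refine Finite.of_injective (β := List.Vector (Fin (d + 1)) D)
    (fun x => ⟨x.word, x.length_eq⟩) ?_
  intro x y h
  cases x
  cases y
  simpa using congrArg Subtype.val h

lemma Adj.getElem? {d D : ℕ} {u v : Vertex d D} (h : Adj u v) (i : ℕ) (hi : i + 1 < D) :
    v.word[i]? = u.word[i + 1]? := by
  obtain ⟨w, hl, -, hu, hv⟩ := h
  rw [hu, hv, List.getElem?_tail, List.getElem?_dropLast, if_pos (by omega)]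

/-- A walk with `m` edges shifts the letters by `m` places. -/
lemma IsWalk.getElem? {d D : ℕ} (p : List (Vertex d D)) {x y : Vertex d D} {m : ℕ}
    (h : IsWalk p x y) (hp : p.length = m + 1) (i : ℕ) (hi : i + m < D) :
    y.word[i]? = x.word[i + m]? := by
  obtain ⟨h1, h2, h3⟩ := h
  induction m generalizing p x with
  | zero =>
    obtain ⟨a, rfl⟩ := List.length_eq_one_iff.1 hp
    simp at h1 h2
    subst h1 h2
    rfl
  | succ m ih =>
    match p, hp, h1, h2, h3 with
    | a :: b :: p, hp, h1, h2, h3 =>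
      simp only [List.head?_cons, Option.some.injEq] at h1
      subst h1
      obtain ⟨hab, h3⟩ := List.isChain_cons_cons.1 h3
      rw [ih (b :: p) (x := b) (by simpa using hp) (by omega) rfl (by simpa using h2) h3,
        hab.getElem? _ (by omega), add_assoc]

/-- The successive windows of a word of length `D + k` form a walk with `k` edges. -/
lemma walk_windows {D k : ℕ} (z : ℕ → Fin 3) (hz : ∀ i, i + 1 < D + k → z i ≠ z (i + 1)) :
    ∃ V : ℕ → Vertex 2 D, (∀ j ≤ k, ∀ i < D, (V j).word[i]? = some (z (j + i))) ∧
      IsWalk ((List.range (k + 1)).map V) (V 0) (V k) := by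
  refine ⟨fun j => window D z (min j k) fun i hi => hz _ (by omega),
    fun j hj i hi => ?_, ?_, ?_, ?_⟩
  · rw [window_getElem? hi, min_eq_left hj]
  · simp [List.head?_eq_getElem?]
  · simp [List.getLast?_eq_getElem?]
  · refine List.isChain_iff_getElem.2 fun j hj => ?_
    simp only [List.length_map, List.length_range] at hj
    simp only [List.getElem_map, List.getElem_range]
    exact adj_window (by omega) _ _ fun i hi => hz _ (by omega)

/-- The walk along the windows of `z` is a geodesic unless the end vertices overlap too much: a
walk with `k - q` edges between them forces `z_i = z_{i+q}` for `k - q ≤ i < D`. -/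
lemma dist_eq_of_walk {D k : ℕ} (hkD : k ≤ D) {x y : Vertex 2 D} {z : ℕ → Fin 3}
    (hx : ∀ i < D, x.word[i]? = some (z i)) (hy : ∀ i < D, y.word[i]? = some (z (k + i)))
    {p : List (Vertex 2 D)} (hp : IsWalk p x y) (hpl : p.length = k + 1)
    (hq : ∀ q, 1 ≤ q → q ≤ k → ¬ ∀ i, k - q ≤ i → i < D → z i = z (i + q)) :
    dist x y = k := by
  have hne : {m | ∃ p : List (Vertex 2 D), IsWalk p x y ∧ p.length = m + 1}.Nonempty :=
    ⟨k, p, hp, hpl⟩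
  refine le_antisymm (Nat.sInf_le ⟨p, hp, hpl⟩) ?_
  by_contra hlt
  obtain ⟨p', hp', hl'⟩ := Nat.sInf_mem hne
  change ¬ k ≤ sInf _ at hlt
  set m := sInf {m | ∃ p : List (Vertex 2 D), IsWalk p x y ∧ p.length = m + 1}
  refine hq (k - m) (by omega) (by omega) fun i hi hiD => ?_
  have := hp'.getElem? _ hl' (i - m) (by omega)
  rw [hy _ (by omega), hx _ (by omega), show i - m + m = i by omega,
    show k + (i - m) = i + (k - m) by omega] at this
  exact (Option.some.inj this).symm

/-! ### Counting the extensions that are not geodesics -/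

/-- The letters `w_i` and `w_{i+q}` agree for `lo ≤ i < lo + len`. -/
def chk (w : ℕ → Fin 3) (q lo len : ℕ) : Bool :=
  (List.range' lo len).all fun i => w i == w (i + q)

/-- An upper bound for the number of extensions of `w_0 … w_D` by `s` letters on the left and
`k - 1 - s` on the right that satisfy `z_i = z_{i+q}` for `k - q ≤ i < D`. It is zero if one of
these equations fails inside `w`; otherwise they force the `s + q - k` letters next to `w`
on the left and the `q - (s + 1)` letters next to `w` on the right (truncated subtraction). -/
def bad (D : ℕ) (w : ℕ → Fin 3) (k s q : ℕ) : ℕ :=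
  if chk w q (k - (s + q)) (min (D - s) (D + 1 - q) - (k - (s + q))) = true then
    2 ^ (k - 1 - (s + q - k) - (q - (s + 1))) else 0

lemma chk_iff (D : ℕ) (w : ℕ → Fin 3) (k s q : ℕ) :
    chk w q (k - (s + q)) (min (D - s) (D + 1 - q) - (k - (s + q))) = true ↔
      ∀ i, k ≤ i + s + q → i + s < D → i + q ≤ D → w i = w (i + q) := by
  simp only [chk, List.all_eq_true, List.mem_range'_1, beq_iff_eq]
  constructor
  · intro h i h1 h2 h3
    exact h i (by omega)
  · intro h i hi
    exact h i (by omega) (by omega) (by omega)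

lemma card_bad_le (D : ℕ) (w : ℕ → Fin 3) (k s q : ℕ) (hk : k ≤ D) (hs : s < k)
    (hq1 : 1 ≤ q) (hq : q ≤ k) :
    ((exts s (w 0) ×ˢ exts (k - 1 - s) (w D)).filter fun lr =>
      ∀ i, k - q ≤ i → i < D → glue D s w lr.1 lr.2 i = glue D s w lr.1 lr.2 (i + q)).card
      ≤ bad D w k s q := by
  unfold bad
  split_ifs with hc
  · have h1 := card_exts_prescribed s (s + q - k) (by omega) (w 0) fun j => w (q - 1 - j)
    have h2 := card_exts_prescribed (k - 1 - s) (q - (s + 1)) (by omega) (w D)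
      fun j => w (D + 1 + j - q)
    have h3 := Nat.mul_le_mul h1 h2
    rw [← Finset.card_product, ← pow_add,
      show s - (s + q - k) + (k - 1 - s - (q - (s + 1)))
        = k - 1 - (s + q - k) - (q - (s + 1)) by omega] at h3
    refine le_trans (Finset.card_le_card fun lr hlr => ?_) h3
    obtain ⟨hm, hp⟩ := Finset.mem_filter.1 hlr
    obtain ⟨hl, hr⟩ := Finset.mem_product.1 hm
    refine Finset.mem_product.2 ⟨Finset.mem_filter.2 ⟨hl, fun j hj => ?_⟩,
      Finset.mem_filter.2 ⟨hr, fun j hj => ?_⟩⟩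
    · have := hp (s - 1 - j) (by omega) (by omega)
      rw [glue_left (by omega), show s - 1 - (s - 1 - j) = j by omega,
        show s - 1 - j + q = s + (q - 1 - j) by omega, glue_mid (by omega)] at this
      exact this
    · have := hp (s + (D + 1 + j - q)) (by omega) (by omega)
      rw [glue_mid (by omega), show s + (D + 1 + j - q) + q = s + D + 1 + j by omega,
        glue_right] at this
      exact this.symm
  · rw [Nat.le_zero, Finset.card_eq_zero, Finset.filter_eq_empty_iff]
    rintro lr - hp
    refine hc ((chk_iff ..).2 fun i h1 h2 h3 => ?_)
    have := hp (s + i) (by omega) (by omega)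
    rwa [glue_mid (by omega), add_assoc, glue_mid h3] at this

/-- Each of the `2 ^ (k - 1)` extensions that is not bad for any `q` contributes a pair of vertices
whose geodesic of length `k` has `e` as its edge number `s + 1`, and the pair determines the
extension. -/
lemma N_lower (D : ℕ) (w : ℕ → Fin 3) (hw : ∀ i < D, w i ≠ w (i + 1)) (e : Edge 2 D)
    (hsrc : ∀ i < D, e.src.word[i]? = some (w i))
    (htgt : ∀ i < D, e.tgt.word[i]? = some (w (i + 1)))
    (k s : ℕ) (hk : k ≤ D) (hs : s < k) :
    2 ^ (k - 1) ≤ N e k (s + 1) + ∑ q ∈ Finset.Icc 1 k, bad D w k s q := by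
  set E := exts s (w 0) ×ˢ exts (k - 1 - s) (w D) with hE
  let P : ℕ → List (Fin 3) × List (Fin 3) → Prop := fun q lr =>
    ∀ i, k - q ≤ i → i < D → glue D s w lr.1 lr.2 i = glue D s w lr.1 lr.2 (i + q)
  have hcard : E.card = 2 ^ (k - 1) := by
    rw [hE, Finset.card_product, card_exts, card_exts, ← pow_add]
    congr 1
    omega
  let Good : List (Fin 3) × List (Fin 3) → Prop := fun lr => ∀ q ∈ Finset.Icc 1 k, ¬ P q lr
  set G := E.filter Good with hG
  have hcover : E ⊆ G ∪ (Finset.Icc 1 k).biUnion fun q => E.filter (P q) := by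
    intro lr hlr
    by_cases h : Good lr
    · exact Finset.mem_union_left _ (Finset.mem_filter.2 ⟨hlr, h⟩)
    · simp only [Good] at h
      push Not at h
      obtain ⟨q, hq, hP⟩ := h
      exact Finset.mem_union_right _
        (Finset.mem_biUnion.2 ⟨q, hq, Finset.mem_filter.2 ⟨hlr, hP⟩⟩)
  have hbad : (∑ q ∈ Finset.Icc 1 k, (E.filter (P q)).card)
      ≤ ∑ q ∈ Finset.Icc 1 k, bad D w k s q := by
    refine Finset.sum_le_sum fun q hq => ?_
    rw [Finset.mem_Icc] at hq
    exact card_bad_le D w k s q hk hs hq.1 hq.2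
  have hGN : G.card ≤ N e k (s + 1) := by
    have hV : ∀ lr ∈ G, ∃ V : ℕ → Vertex 2 D,
        (∀ j ≤ k, ∀ i < D, (V j).word[i]? = some (glue D s w lr.1 lr.2 (j + i))) ∧
        IsWalk ((List.range (k + 1)).map V) (V 0) (V k) := by
      intro lr hlr
      obtain ⟨hl, hr⟩ := Finset.mem_product.1 (Finset.mem_filter.1 hlr).1
      exact walk_windows _ (glue_chain hs hw hl hr)
    have : Nonempty (Vertex 2 D) := ⟨e.src⟩
    choose! V hVw hVp using hV
    rw [N, ← Set.ncard_coe_finset]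
    refine Set.ncard_le_ncard_of_injOn (fun lr => (V lr 0, V lr k)) ?_ ?_ (Set.toFinite _)
    · intro lr hlr
      have hlr' : lr ∈ G := hlr
      have hV1 := hVw lr hlr'
      refine ⟨?_, _, hVp lr hlr', by simp, ?_, ?_⟩
      · refine dist_eq_of_walk hk (z := glue D s w lr.1 lr.2) ?_ (hV1 k le_rfl) (hVp lr hlr')
          (by simp) ?_
        · simpa using hV1 0 (by omega)
        · intro q hq1 hqk
          exact (Finset.mem_filter.1 hlr').2 q (Finset.mem_Icc.2 ⟨hq1, hqk⟩)
      · have : V lr s = e.src := Vertex.ext_getElem? fun i hi => by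
          rw [hV1 s hs.le i hi, hsrc i hi, glue_mid hi.le]
        simp [← this, show s < k + 1 by omega]
      · have : V lr (s + 1) = e.tgt := Vertex.ext_getElem? fun i hi => by
          rw [hV1 (s + 1) hs i hi, htgt i hi, show s + 1 + i = s + (i + 1) by omega, glue_mid hi]
        simp [← this, show s < k by omega]
    · intro a ha b hb hab
      obtain ⟨hV0, hVk⟩ := Prod.mk.inj hab
      have ha' : a ∈ G := ha
      have hb' : b ∈ G := hb
      have hz : ∀ i < D + k, glue D s w a.1 a.2 i = glue D s w b.1 b.2 i := by
        intro i hi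
        by_cases hiD : i < D
        · have h1 := hVw a ha' 0 (by omega) i hiD
          have h2 := hVw b hb' 0 (by omega) i hiD
          rw [hV0, h2] at h1
          simpa using (Option.some.inj h1).symm
        · have h1 := hVw a ha' k le_rfl (i - k) (by omega)
          have h2 := hVw b hb' k le_rfl (i - k) (by omega)
          rw [hVk, h2, show k + (i - k) = i by omega] at h1
          exact (Option.some.inj h1).symm
      obtain ⟨hal, har⟩ := Finset.mem_product.1 (Finset.mem_filter.1 ha').1
      obtain ⟨hbl, hbr⟩ := Finset.mem_product.1 (Finset.mem_filter.1 hb').1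
      have lal := length_of_mem_exts hal
      have lar := length_of_mem_exts har
      have lbl := length_of_mem_exts hbl
      have lbr := length_of_mem_exts hbr
      refine Prod.ext (List.ext_getElem (by omega) fun i h1 h2 => ?_)
        (List.ext_getElem (by omega) fun i h1 h2 => ?_)
      · have := hz (s - 1 - i) (by omega)
        rw [glue_left (by omega), glue_left (by omega), show s - 1 - (s - 1 - i) = i by omega]
          at this
        simpa [List.getD_eq_getElem, h1, h2] using this
      · have := hz (s + D + 1 + i) (by omega)
        rw [glue_right, glue_right] at this
        simpa [List.getD_eq_getElem, h1, h2] using this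
  have h1 := Finset.card_le_card hcover
  have h2 := Finset.card_union_le G ((Finset.Icc 1 k).biUnion fun q => E.filter (P q))
  have h3 := Finset.card_biUnion_le (s := Finset.Icc 1 k) (t := fun q => E.filter (P q))
  omega

/-- The total of the bounds `bad`: the loss in `cong e` is at most this. -/
def totalBad (D : ℕ) (w : ℕ → Fin 3) : ℕ :=
  ∑ k ∈ Finset.Icc 1 D, ∑ s ∈ Finset.range k, ∑ q ∈ Finset.Icc 1 k, bad D w k s q

lemma exists_edge (D : ℕ) (w : ℕ → Fin 3) (hw : ∀ i < D, w i ≠ w (i + 1)) :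
    ∃ e : Edge 2 D, ∑ k ∈ Finset.Icc 1 D, k * 2 ^ (k - 1) ≤ cong e + totalBad D w := by
  have h0 : ∀ i, i + 1 < D → w (0 + i) ≠ w (0 + i + 1) := fun i hi => hw _ (by omega)
  have h1 : ∀ i, i + 1 < D → w (1 + i) ≠ w (1 + i + 1) := fun i hi => hw _ (by omega)
  let e : Edge 2 D := ⟨window D w 0 h0, window D w 1 h1,
    adj_window rfl h0 h1 fun i hi => hw _ (by omega)⟩
  refine ⟨e, ?_⟩
  rw [cong, totalBad, ← Finset.sum_add_distrib]
  refine Finset.sum_le_sum fun k hk => ?_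
  rw [Finset.mem_Icc] at hk
  have hU : U e k = ∑ s ∈ Finset.range k, N e k (s + 1) := by
    rw [U, Finset.range_eq_Ico, Finset.sum_Ico_add' (fun t => N e k t) 0 k 1]
    rfl
  rw [hU, ← Finset.sum_add_distrib]
  calc k * 2 ^ (k - 1) = ∑ s ∈ Finset.range k, 2 ^ (k - 1) := by simp
    _ ≤ _ := Finset.sum_le_sum fun s hs => N_lower D w hw e
      (fun i hi => by rw [window_getElem? hi, zero_add])
      (fun i hi => by rw [window_getElem? hi, add_comm 1 i])
      k s hk.2 (Finset.mem_range.1 hs)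

/-! ### The estimate for long words -/

lemma sum_mul_two_pow (n : ℕ) :
    ∑ k ∈ Finset.Icc 1 n, k * 2 ^ (k - 1) + 2 ^ n = n * 2 ^ n + 1 := by
  induction n with
  | zero => simp
  | succ n ih =>
    rw [Finset.sum_Icc_succ_top (by omega), Nat.add_sub_cancel, pow_succ]
    linarith

/-- The bound for `bad` used when `s ≥ D - 3`, in which case the part of `w` that has to be
`q`-periodic may be very short. Reflection `s ↦ k - 1 - s` covers the left end. -/
def endCost (D k s q : ℕ) : ℕ :=
  if D ≤ s + 3 ∧ k ≤ s + q then 2 ^ (k - 1 - (s + q - k)) else 0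

lemma sum_endCost_q (D k s : ℕ) (hs : s < k) :
    ∑ q ∈ Finset.Icc 1 k, endCost D k s q ≤ if D ≤ s + 3 then 2 ^ k else 0 := by
  split_ifs with h
  · simp only [endCost, h, true_and]
    rw [← Finset.sum_filter]
    calc ∑ q ∈ (Finset.Icc 1 k).filter (fun q => k ≤ s + q), 2 ^ (k - 1 - (s + q - k))
        = ∑ j ∈ ((Finset.Icc 1 k).filter fun q => k ≤ s + q).image
            (fun q => k - 1 - (s + q - k)), 2 ^ j := by
          rw [Finset.sum_image]
          intro a ha b hb hab
          simp only [Finset.coe_filter, Finset.mem_Icc, Set.mem_ofPred_eq] at ha hb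
          simp only at hab
          omega
      _ ≤ ∑ j ∈ Finset.range k, 2 ^ j := by
          refine Finset.sum_le_sum_of_subset fun j hj => ?_
          simp only [Finset.mem_image, Finset.mem_filter, Finset.mem_Icc] at hj
          obtain ⟨q, hq, rfl⟩ := hj
          rw [Finset.mem_range]
          omega
      _ ≤ 2 ^ k := (Nat.geomSum_lt le_rfl fun j hj => Finset.mem_range.1 hj).le
  · simp [endCost, h]

lemma sum_endCost (D : ℕ) (hD : 3 ≤ D) :
    ∑ k ∈ Finset.Icc 1 D, ∑ s ∈ Finset.range k, ∑ q ∈ Finset.Icc 1 k, endCost D k s q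
      ≤ 17 * 2 ^ (D - 2) := by
  obtain ⟨n, rfl⟩ : ∃ n, D = n + 3 := ⟨D - 3, by omega⟩
  have h1 : ∀ k ∈ Finset.Icc 1 (n + 3), ∑ s ∈ Finset.range k, ∑ q ∈ Finset.Icc 1 k,
      endCost (n + 3) k s q ≤ (k - n) * 2 ^ k := by
    intro k _
    refine (Finset.sum_le_sum fun s hs =>
      sum_endCost_q (n + 3) k s (Finset.mem_range.1 hs)).trans ?_
    rw [← Finset.sum_filter, Finset.sum_const, smul_eq_mul]
    refine Nat.mul_le_mul_right _ ?_
    rw [← Nat.card_Ico]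
    refine Finset.card_le_card fun s hs => ?_
    simp only [Finset.mem_filter, Finset.mem_range] at hs
    rw [Finset.mem_Ico]
    omega
  refine (Finset.sum_le_sum h1).trans ?_
  rw [Finset.sum_Icc_succ_top (by omega), Finset.sum_Icc_succ_top (by omega),
    Finset.sum_Icc_succ_top (by omega), Finset.sum_eq_zero]
  · rw [show n + 1 - n = 1 by omega, show n + 1 + 1 - n = 2 by omega,
      show n + 2 + 1 - n = 3 by omega, show n + 3 - 2 = n + 1 by omega]
    simp only [pow_succ]
    omega
  · intro k hk
    rw [Finset.mem_Icc] at hk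
    rw [Nat.sub_eq_zero_of_le hk.2, zero_mul]

/-- When `s` and `k - 1 - s` are both below `D - 3` and `q < D - 3`, the periodic part of `w` covers a
recurrence of the first or last four letters of `capWord D`, or a square in its interior, so there
are no bad extensions. When only `q ≥ D - 3`, at most six letters remain free. -/
lemma bad_capWord_le {D k s q : ℕ} (hk : k ≤ D) (hs : s < k) (hq1 : 1 ≤ q) (hqk : q ≤ k) :
    bad D (capWord D) k s q ≤ endCost D k s q + endCost D k (k - 1 - s) q + 64 := by
  unfold bad
  split_ifs with hc
  swap
  · omega
  rw [chk_iff] at hc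
  by_cases hA : D ≤ s + 3 ∧ k ≤ s + q
  · rw [endCost, if_pos hA]
    have := Nat.pow_le_pow_right (n := 2) (by omega)
      (Nat.sub_le (k - 1 - (s + q - k)) (q - (s + 1)))
    omega
  by_cases hB : D ≤ k - 1 - s + 3 ∧ k ≤ k - 1 - s + q
  · have : endCost D k (k - 1 - s) q = 2 ^ (k - 1 - (k - 1 - s + q - k)) := if_pos hB
    rw [this]
    have := Nat.pow_le_pow_right (show 0 < 2 by omega)
      (show k - 1 - (s + q - k) - (q - (s + 1)) ≤ k - 1 - (k - 1 - s + q - k) by omega)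
    omega
  -- the free letters number `k - 1 - (s + q - k) - (q - (s + 1))`, at most `6` here
  by_cases hC : D ≤ q + 3
  · have := Nat.pow_le_pow_right (show 0 < 2 by omega)
      (show k - 1 - (s + q - k) - (q - (s + 1)) ≤ 6 by omega)
    omega
  exfalso
  by_cases h1 : k ≤ s + q
  · exact capWord_prefix q hq1 (by omega) fun i hi => hc i (by omega) (by omega) (by omega)
  by_cases h2 : s + 1 ≤ q
  · exact capWord_suffix q hq1 (by omega) fun i hi => hc _ (by omega) (by omega) (by omega)
  · exact capWord_interior (k - (s + q)) q (by omega) hq1 (by omega)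
      fun j hj => hc _ (by omega) (by omega) (by omega)

lemma cube_le {D : ℕ} (hD : 38 ≤ D) : 64 * D ^ 3 ≤ 2 ^ (D - 2) := by
  induction D, hD using Nat.le_induction with
  | base => norm_num
  | succ D hD ih =>
    have h2 : 2 ^ (D + 1 - 2) = 2 * 2 ^ (D - 2) := by
      rw [show D + 1 - 2 = D - 2 + 1 by omega, pow_succ']
    have : (D + 1) ^ 3 ≤ 2 * D ^ 3 := by nlinarith [Nat.pow_le_pow_left hD 2]
    omega

lemma totalBad_capWord_le {D : ℕ} (hD : 38 ≤ D) :
    totalBad D (capWord D) ≤ 35 * 2 ^ (D - 2) := by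
  have h : totalBad D (capWord D) ≤ ∑ k ∈ Finset.Icc 1 D, ∑ s ∈ Finset.range k,
      ∑ q ∈ Finset.Icc 1 k, (endCost D k s q + endCost D k (k - 1 - s) q + 64) := by
    refine Finset.sum_le_sum fun k hk => Finset.sum_le_sum fun s hs => Finset.sum_le_sum
      fun q hq => ?_
    rw [Finset.mem_Icc] at hk hq
    exact bad_capWord_le hk.2 (Finset.mem_range.1 hs) hq.1 hq.2
  have h64 : ∑ k ∈ Finset.Icc 1 D, ∑ s ∈ Finset.range k, ∑ q ∈ Finset.Icc 1 k, 64
      ≤ 64 * D ^ 3 := by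
    calc _ ≤ ∑ k ∈ Finset.Icc 1 D, 64 * D ^ 2 := Finset.sum_le_sum fun k hk => by
          rw [Finset.mem_Icc] at hk
          simp only [Finset.sum_const, Nat.card_Icc, Finset.card_range, smul_eq_mul]
          rw [Nat.add_sub_cancel]
          nlinarith [Nat.mul_le_mul hk.2 hk.2]
      _ = 64 * D ^ 3 := by
          simp only [Finset.sum_const, Nat.card_Icc, smul_eq_mul]
          rw [Nat.add_sub_cancel]
          ring
  have hrefl : ∀ k, ∑ s ∈ Finset.range k, ∑ q ∈ Finset.Icc 1 k, endCost D k (k - 1 - s) q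
      = ∑ s ∈ Finset.range k, ∑ q ∈ Finset.Icc 1 k, endCost D k s q := fun k =>
    Finset.sum_range_reflect (fun s => ∑ q ∈ Finset.Icc 1 k, endCost D k s q) k
  simp only [Finset.sum_add_distrib, hrefl] at h
  have := sum_endCost D (by omega)
  have := cube_le hD
  omega

/-- Here `τ(2,n+2) + (n - 1) * 2 ^ n + 1 = ∑ k * 2 ^ (k - 1)`, the number of extensions of all
lengths. -/
lemma exists_of_totalBad_lt {n : ℕ} (w : ℕ → Fin 3) (hw : ∀ i < n + 2, w i ≠ w (i + 1))
    (h : totalBad (n + 2) w + 2 ^ n ≤ n * 2 ^ n) :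
    ∃ e : Edge 2 (n + 2), tau 2 (n + 2) < cong e := by
  obtain ⟨e, he⟩ := exists_edge (n + 2) w hw
  refine ⟨e, ?_⟩
  have hs := sum_mul_two_pow (n + 2)
  have ht : tau 2 (n + 2) = (n + 1) * 2 ^ n + (n + 2) * 2 ^ (n + 1) := rfl
  rw [ht]
  simp only [pow_succ] at hs ⊢
  nlinarith

/-! ### The words for small diameter -/

/-- The word whose letters are the ternary digits of `W`, the least significant first. -/
def digits (W i : ℕ) : Fin 3 := ⟨W / 3 ^ i % 3, Nat.mod_lt _ (by omega)⟩

lemma mod_three_pow_congr (X Y n : ℕ) (h : ∀ i < n, X / 3 ^ i % 3 = Y / 3 ^ i % 3) :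
    X % 3 ^ n = Y % 3 ^ n := by
  induction n with
  | zero => simp [Nat.mod_one]
  | succ n ih =>
    rw [Nat.mod_pow_succ, Nat.mod_pow_succ, h n (by omega), ih fun i hi => h i (by omega)]

/-- `∑ i < n, f i`, by recursion on `n`. -/
def sumBelow (f : ℕ → ℕ) : ℕ → ℕ
  | 0 => 0
  | n + 1 => sumBelow f n + f n

lemma sumBelow_eq (f : ℕ → ℕ) (n : ℕ) : sumBelow f n = ∑ i ∈ Finset.range n, f i := by
  induction n with
  | zero => rfl
  | succ n ih => rw [sumBelow, ih, Finset.sum_range_succ]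

/-- Whether `f` holds on `{0, …, n - 1}`, by recursion on `n`. -/
def allBelow (f : ℕ → Bool) : ℕ → Bool
  | 0 => true
  | n + 1 => allBelow f n && f n

lemma of_allBelow {f : ℕ → Bool} {n : ℕ} (h : allBelow f n = true) (i : ℕ) (hi : i < n) :
    f i = true := by
  induction n with
  | zero => omega
  | succ n ih =>
    rw [allBelow, Bool.and_eq_true] at h
    rcases Nat.lt_or_ge i n with h' | h'
    · exact ih h.1 h'
    · obtain rfl : i = n := by omega
      exact h.2

/-- The `len` digits of `W` from position `lo` on agree with those from position `lo + q` on.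
The functions of `Nat` are applied without notation to speed up kernel reduction. -/
def sameDigits (W q lo len : ℕ) : Bool :=
  Nat.beq (Nat.mod (Nat.div W (Nat.pow 3 lo)) (Nat.pow 3 len))
    (Nat.mod (Nat.div W (Nat.pow 3 (Nat.add lo q))) (Nat.pow 3 len))

lemma sameDigits_of_chk {W q lo len : ℕ} (h : chk (digits W) q lo len = true) :
    sameDigits W q lo len = true := by
  rw [sameDigits, Nat.beq_eq]
  refine mod_three_pow_congr (W / 3 ^ lo) (W / 3 ^ (lo + q)) _ fun i hi => ?_
  rw [Nat.div_div_eq_div_mul, Nat.div_div_eq_div_mul, ← pow_add, ← pow_add]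
  simp only [chk, List.all_eq_true, List.mem_range'_1, beq_iff_eq] at h
  have := congrArg Fin.val (h (lo + i) (by omega))
  rw [show lo + i + q = lo + q + i by omega] at this
  exact this

/-- An upper bound for `bad` of the word `digits W`. -/
def badDigits (D W k s q : ℕ) : ℕ :=
  bif sameDigits W q (Nat.sub k (Nat.add s q))
      (Nat.sub (Nat.sub (Nat.sub D s) (Nat.sub q (Nat.succ s))) (Nat.sub k (Nat.add s q))) then
    2 ^ (k - 1 - (s + q - k) - (q - (s + 1))) else 0

lemma bad_le_badDigits (D W k s q : ℕ) : bad D (digits W) k s q ≤ badDigits D W k s q := by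
  unfold bad
  split_ifs with h
  swap
  · exact Nat.zero_le _
  rw [show min (D - s) (D + 1 - q) = D - s - (q - (s + 1)) by omega] at h
  have h' : sameDigits W q (Nat.sub k (Nat.add s q))
    (Nat.sub (Nat.sub (Nat.sub D s) (Nat.sub q (Nat.succ s))) (Nat.sub k (Nat.add s q))) = true :=
    sameDigits_of_chk h
  rw [badDigits, h', cond_true]

/-- An upper bound for `totalBad` of the word `digits W`. -/
def totalBadDigits (D W : ℕ) : ℕ :=
  sumBelow (fun k => sumBelow (fun s => sumBelow (fun q => badDigits D W (k + 1) s (q + 1))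
    (k + 1)) (k + 1)) D

lemma totalBad_le_digits (D W : ℕ) : totalBad D (digits W) ≤ totalBadDigits D W := by
  have hI : ∀ (n : ℕ) (f : ℕ → ℕ), ∑ q ∈ Finset.Icc 1 n, f q
      = ∑ q ∈ Finset.range n, f (q + 1) := fun n f => by
    rw [Finset.range_eq_Ico, Finset.sum_Ico_add' f 0 n 1]
    rfl
  simp only [totalBad, totalBadDigits, sumBelow_eq, hI]
  exact Finset.sum_le_sum fun _ _ => Finset.sum_le_sum fun _ _ => Finset.sum_le_sum fun _ _ =>
    bad_le_badDigits ..

/-- The test that `digits W` is an edge word of `K(2,n+2)` with few bad extensions. The case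
distinction on `W` makes kernel reduction replace `W` by its value before anything else. -/
def digitsTest (n : ℕ) : ℕ → Bool
  | 0 => false
  | W + 1 =>
    allBelow (fun i => !Nat.beq ((W + 1) / 3 ^ i % 3) ((W + 1) / 3 ^ (i + 1) % 3)) (n + 2) &&
      Nat.ble (totalBadDigits (n + 2) (W + 1) + 2 ^ n) (n * 2 ^ n)

lemma of_digitsTest {n W : ℕ} (h : digitsTest n W = true) :
    (∀ i < n + 2, digits W i ≠ digits W (i + 1)) ∧
      totalBad (n + 2) (digits W) + 2 ^ n ≤ n * 2 ^ n := by
  cases W with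
  | zero => simp [digitsTest] at h
  | succ W =>
    rw [digitsTest, Bool.and_eq_true] at h
    refine ⟨fun i hi he => ?_, ?_⟩
    · have h1 := of_allBelow h.1 i hi
      simp only [Bool.not_eq_true', ← Bool.not_eq_true, Nat.beq_eq] at h1
      exact h1 (congrArg Fin.val he)
    · have h1 := Nat.le_of_ble_eq_true h.2
      have h2 := totalBad_le_digits (n + 2) (W + 1)
      omega

/-- A code for an edge word of `K(2,D)`. For `D ≥ 10` this is the word `capWord D`, the big
numeral coding the first forty letters of `vtm`; the six words for smaller `D` were found by
search. -/
def smallCode (D : ℕ) : ℕ :=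
  let V := 4843056615362929760 / 3 ^ (D % 2)
  let a := V / 3 ^ (D - 1) % 3
  bif Nat.ble 10 D then
    V / 3 ^ 2 % 3 + (V % 3 ^ D - V % 3) + 3 ^ D * bif Nat.beq a 1 then V / 3 ^ (D - 2) % 3 else 1
  else [48, 426, 426, 2721, 5637, 24483].getD (D - 4) 0

set_option maxRecDepth 100000 in
lemma smallCode_test : allBelow (fun m => digitsTest (m + 2) (smallCode (m + 4))) 34 = true := by
  decide +kernel

/-- The word is `smallCode D` for `D ≤ 37` and `capWord D` beyond. -/
lemma exists_tau_lt_cong (D : ℕ) (hD : 4 ≤ D) : ∃ e : Edge 2 D, tau 2 D < cong e := by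
  obtain ⟨n, rfl⟩ : ∃ n, D = n + 2 := ⟨D - 2, by omega⟩
  by_cases h : n < 36
  · have ht := of_allBelow smallCode_test (n - 2) (by omega)
    obtain ⟨hw, hb⟩ := of_digitsTest ht
    rw [show n - 2 + 2 = n by omega] at hw hb
    exact exists_of_totalBad_lt _ hw hb
  · have hb := totalBad_capWord_le (D := n + 2) (by omega)
    refine exists_of_totalBad_lt (capWord (n + 2)) (capWord_chain hD) ?_
    rw [Nat.add_sub_cancel] at hb
    nlinarith [Nat.mul_le_mul_right (2 ^ n) (show 36 ≤ n by omega)]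

end Kautz

/-- For every integer `D ≥ 4` there exists a directed edge `e` of the Kautz
digraph `K(2,D)` with `cong(e) > τ(2,D)`. -/
theorem statement4 (D : ℕ) (hD : 4 ≤ D) :
    ∃ e : Kautz.Edge 2 D, Kautz.tau 2 D < Kautz.cong e := by
  exact Kautz.exists_tau_lt_cong D hD
end

section
/- Let e be a directed edge of K(2,D) whose edge-word w(e) is unbordered and square-free, and let t be an integer with 1 ≤ t and 2t ≤ D+1. If R_t(w(e)) is nonempty and r_0 := min R_t(w(e)), then Δ_t(e) ≤ (1/(1 − 2^{−(t+1)}))·2^{D−1−r_0+t}. -/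
/-!
A walk of length `D` using `e` as its `t`-th edge reads a word `P·w·S` with `w = w(e)`,
`|P| = t - 1` and `|S| = D - t`, so there are `2^(D-1)` of them, determined by their endpoints
`x·y = P·w·S`. Such a walk fails to be a geodesic exactly when some suffix of `x` of length
`j ≥ 1` is a prefix of `y`. Since `y` starts with the suffix `B` of `w` of length `t`:

* `j ≤ t` would give a square inside `w`;
* `j > D - t` would make a suffix of `B` a prefix of `w`, hence a border;
* otherwise `j ∈ R_t(w)`, and the first `j - t` letters of `S` are forced, which leaves
  `2^(t-1) * 2^(D-j)` choices of `(P, S)`.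

This case analysis is `overlap_mem_Rt`, and `pow_le_N_add` is the resulting union bound
`Δ_t(e) ≤ ∑_{r ∈ R_t(w)} 2^(D-1-r+t)`. Two elements of `R_t(w)` differ by at least `t + 1`,
because occurrences of `B` at distance `p ≤ t` create a square of period `p` (`Rt_gap`); so the
sum is dominated by a geometric series of ratio `2^(-(t+1))` (`sum_gap`).
-/

open scoped BigOperators Classical

namespace Kautz

/-! ### Counting right extensions -/

/-- The words `S` of length `n` over `{0,1,2}` such that `a·S` has distinct adjacent letters. -/
def ext : ℕ → Fin 3 → Finset (List (Fin 3))
  | 0, _ => {[]}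
  | n + 1, a => (Finset.univ.filter (· ≠ a)).biUnion fun b => (ext n b).image (b :: ·)

lemma mem_ext {n : ℕ} {a : Fin 3} {S : List (Fin 3)} :
    S ∈ ext n a ↔ S.length = n ∧ (a :: S).IsChain (· ≠ ·) := by
  induction n generalizing a S with
  | zero =>
    simp only [ext, Finset.mem_singleton, List.length_eq_zero_iff]
    constructor
    · rintro rfl; simp
    · exact fun h => h.1
  | succ n ih =>
    simp only [ext, Finset.mem_biUnion, Finset.mem_filter, Finset.mem_univ, true_and,
      Finset.mem_image]
    constructor
    · rintro ⟨b, hb, S', hS', rfl⟩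
      obtain ⟨h1, h2⟩ := ih.1 hS'
      exact ⟨by simp [h1], List.isChain_cons_cons.2 ⟨fun h => hb h.symm, h2⟩⟩
    · rintro ⟨h1, h2⟩
      cases S with
      | nil => simp at h1
      | cons b S' =>
        obtain ⟨h3, h4⟩ := List.isChain_cons_cons.1 h2
        exact ⟨b, fun h => h3 h.symm, S', ih.2 ⟨by simpa using h1, h4⟩, rfl⟩

lemma card_ext (n : ℕ) (a : Fin 3) : (ext n a).card = 2 ^ n := by
  induction n generalizing a with
  | zero => simp [ext]
  | succ n ih =>
    rw [ext, Finset.card_biUnion]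
    · have h2 : (Finset.univ.filter (· ≠ a)).card = 2 := by
        rw [Finset.filter_ne' Finset.univ a, Finset.card_erase_of_mem (Finset.mem_univ a)]
        simp
      have h1 : ∀ b : Fin 3, ((ext n b).image (b :: ·)).card = 2 ^ n := fun b => by
        rw [Finset.card_image_of_injective _ (List.cons_injective), ih]
      rw [Finset.sum_congr rfl fun b _ => h1 b, Finset.sum_const, h2, smul_eq_mul, pow_succ,
        mul_comm]
    · intro b _ c _ hbc
      rw [Function.onFun, Finset.disjoint_left]
      intro S hS hS'
      obtain ⟨S₁, _, rfl⟩ := Finset.mem_image.1 hS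
      obtain ⟨S₂, _, h⟩ := Finset.mem_image.1 hS'
      exact hbc (List.cons.inj h).1.symm

/-- Prescribing a prefix `Q` leaves at most `2^(n - |Q|)` extensions: deleting `Q` yields an
extension of the last letter of `a·Q`. -/
lemma card_ext_prefix (n : ℕ) (a : Fin 3) (Q : List (Fin 3)) :
    ((ext n a).filter (Q <+: ·)).card ≤ 2 ^ (n - Q.length) := by
  rw [← card_ext (n - Q.length) ((a :: Q).getLast (by simp))]
  refine Finset.card_le_card_of_injOn (fun S => S.drop Q.length) ?_ ?_
  · intro S hS
    obtain ⟨hS, S', rfl⟩ := Finset.mem_filter.1 (Finset.mem_coe.1 hS)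
    obtain ⟨h1, h2⟩ := mem_ext.1 hS
    simp only [List.drop_left, Finset.mem_coe]
    refine mem_ext.2 ⟨by simp at h1; omega, ?_⟩
    have h3 : a :: (Q ++ S') = (a :: Q).dropLast ++ ((a :: Q).getLast (by simp) :: S') := by
      conv_lhs => rw [← List.cons_append, ← List.dropLast_append_getLast (l := a :: Q) (by simp)]
      simp
    rw [h3] at h2
    exact h2.right_of_append
  · intro S hS T hT h
    obtain ⟨_, S', rfl⟩ := Finset.mem_filter.1 (Finset.mem_coe.1 hS)
    obtain ⟨_, T', rfl⟩ := Finset.mem_filter.1 (Finset.mem_coe.1 hT)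
    simpa using h

/-! ### Walks and words -/

lemma Vertex.ext_word {d D : ℕ} {u v : Vertex d D} (h : u.word = v.word) : u = v := by
  cases u; cases v; cases h; rfl

instance inst_s13 {d D : ℕ} : Finite (Vertex d D) :=
  Finite.of_injective (β := List.Vector (Fin (d + 1)) D) (fun v => ⟨v.word, v.length_eq⟩)
    fun _ _ h => Vertex.ext_word (congrArg Subtype.val h)

lemma Edge.word_spec {d D : ℕ} (hD : 1 ≤ D) (e : Edge d D) :
    e.word.length = D + 1 ∧ e.word.IsChain (· ≠ ·) ∧ e.src.word = e.word.take D ∧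
      e.tgt.word = e.word.drop 1 := by
  obtain ⟨w, h1, h2, h3, h4⟩ := e.adj
  rw [List.dropLast_eq_take, h1, Nat.add_sub_cancel] at h3
  rw [← List.drop_one] at h4
  have : e.word = w := by
    rw [Edge.word, h3, h4, List.drop_drop, show 1 + (D - 1) = D by omega, List.take_append_drop]
  rw [this]
  exact ⟨h1, h2, h3, h4⟩

/-- A walk with `k` edges forces an overlap of length `D - k`. -/
lemma overlap_of_walk {d D : ℕ} (k : ℕ) (p : List (Vertex d D)) (x y : Vertex d D)
    (hp : IsWalk p x y) (hk : p.length = k + 1) :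
    x.word.drop k = y.word.take (D - k) := by
  induction k generalizing p x with
  | zero =>
    obtain ⟨a, rfl⟩ := List.length_eq_one_iff.1 hk
    obtain ⟨h1, h2, -⟩ := hp
    simp at h1 h2
    subst h1 h2
    simp [← a.length_eq]
  | succ k ih =>
    match p, hk with
    | a :: b :: q, hk =>
      obtain ⟨h1, h2, h3⟩ := hp
      obtain ⟨⟨w, hw, -, h4, h5⟩, h6⟩ := List.isChain_cons_cons.1 h3
      have hb := ih (b :: q) b ⟨rfl, by simpa using h2, h6⟩ (by simpa using hk)
      obtain rfl : a = x := by simpa using h1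
      have h7 : a.word.drop 1 = b.word.take (D - 1) := by
        rw [h4, h5, List.dropLast_eq_take, ← List.drop_one, List.drop_take, hw]; simp
      rw [add_comm k 1, ← List.drop_drop, h7, List.drop_take, hb, List.take_take]
      congr 1; omega

/-- A word of length `2D` with distinct adjacent letters is read off as a walk with `D` edges,
whose `i`-th vertex is the factor of length `D` at position `i`. -/
lemma exists_walk {d D : ℕ} (W : List (Fin (d + 1))) (hl : W.length = 2 * D)
    (hc : W.IsChain (· ≠ ·)) :
    ∃ (p : List (Vertex d D)) (x y : Vertex d D), x.word = W.take D ∧ y.word = W.drop D ∧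
      IsWalk p x y ∧ p.length = D + 1 ∧
      ∀ i ≤ D, ∃ v, p[i]? = some v ∧ v.word = (W.drop i).take D := by
  let f : Fin (D + 1) → Vertex d D := fun i =>
    ⟨(W.drop i).take D, by simp; omega, (hc.drop _).take _⟩
  have hW : (W.drop D).take D = W.drop D := List.take_of_length_le (by simp; omega)
  refine ⟨List.ofFn f, f 0, f (Fin.last D), by simp [f], by simp [f, hW], ⟨?_, ?_, ?_⟩, by simp, ?_⟩
  · simp [List.head?_eq_getElem?]
  · rw [List.getLast?_eq_getElem?, List.length_ofFn, Nat.add_sub_cancel, List.getElem?_ofFn,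
      dif_pos (Nat.lt_succ_self D)]
    rfl
  · refine List.isChain_iff_getElem.2 fun i hi => ?_
    have hi' : i < D := by simpa using hi
    simp only [List.getElem_ofFn]
    refine ⟨(W.drop i).take (D + 1), by simp; omega, (hc.drop _).take _, ?_, ?_⟩
    · have h1 : ((W.drop i).take (D + 1)).length = D + 1 := by simp; omega
      rw [List.dropLast_eq_take, h1, List.take_take]; simp [f]
    · simp [f, ← List.drop_one, List.drop_take]
  · intro i hi
    exact ⟨f ⟨i, by omega⟩, by
      rw [List.getElem?_ofFn, dif_pos (Nat.lt_succ_of_le hi)], rfl⟩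

/-! ### Positions of the suffix in a square-free word -/

lemma Rt_occ {α : Type*} {w : List α} {t r : ℕ} (h : r ∈ Rt w t) :
    t + 1 ≤ r ∧ r + t + 1 ≤ w.length ∧
      (w.drop (w.length - t - r)).take t = suffixWord w t := by
  obtain ⟨h1, A, V, -, hw, hr⟩ := Finset.mem_filter.1 h
  rw [Finset.mem_Icc] at h1
  have hB : (suffixWord w t).length = t := by simp [suffixWord]; omega
  refine ⟨h1.1, by omega, ?_⟩
  have hl := congrArg List.length hw
  simp [hB] at hl
  have : w.length - t - r = A.length := by omega
  rw [this]
  generalize suffixWord w t = B at *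
  rw [hw]; simp [← hB]

/-- Two occurrences of a word of length `t` at distance `p ≤ t` produce a square of period `p`. -/
lemma Rt_gap {α : Type*} {w : List α} (hsf : SquareFree w) {t r r' : ℕ} (h : r ∈ Rt w t)
    (h' : r' ∈ Rt w t) (hlt : r < r') : r + (t + 1) ≤ r' := by
  by_contra hc
  obtain ⟨a1, a2, a3⟩ := Rt_occ h
  obtain ⟨b1, b2, b3⟩ := Rt_occ h'
  obtain ⟨p, rfl⟩ := Nat.exists_eq_add_of_lt hlt
  set s := w.length - t - (r + p + 1) with hs
  have hs' : w.length - t - r = s + (p + 1) := by omega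
  rw [hs', ← b3] at a3
  have h1 := congrArg (List.take (p + 1)) a3
  rw [List.take_take, List.take_take, min_eq_left (by omega)] at h1
  refine hsf ⟨(w.drop s).take (p + 1), ?_, ?_⟩
  · intro h0
    have := congrArg List.length h0
    simp at this; omega
  · have h2 : (w.drop s).take (p + 1) ++ (w.drop s).take (p + 1)
        = (w.drop s).take (p + 1 + (p + 1)) := by
      conv_rhs => rw [List.take_add, List.drop_drop, h1]
    rw [h2]
    exact (List.take_prefix _ _).isInfix.trans (List.drop_suffix _ _).isInfix

/-- Summing a geometric progression along a set of exponents with gaps at least `g`. -/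
lemma sum_gap (g : ℕ) (hg : 1 ≤ g) (R : Finset ℕ) :
    (∀ r ∈ R, ∀ r' ∈ R, r < r' → r + g ≤ r') → ∀ m, (∀ r ∈ R, m ≤ r) →
      ∑ r ∈ R, (1 / 2 : ℝ) ^ r ≤ 1 / (1 - (1 / 2 : ℝ) ^ g) * (1 / 2 : ℝ) ^ m := by
  have hx : (1 / 2 : ℝ) ^ g < 1 := pow_lt_one₀ (by norm_num) (by norm_num) (by omega)
  have hpos : 0 < 1 - (1 / 2 : ℝ) ^ g := by linarith
  induction R using Finset.induction_on_min with
  | empty => intro _ m _; simp only [Finset.sum_empty]; positivity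
  | insert a s ha ih =>
    intro hgap m hm
    rw [Finset.sum_insert fun h => (ha a h).false]
    have h1 := ih (fun r hr r' hr' => hgap r (Finset.mem_insert_of_mem hr) r'
      (Finset.mem_insert_of_mem hr')) (a + g) fun r hr =>
        hgap a (Finset.mem_insert_self _ _) r (Finset.mem_insert_of_mem hr) (ha r hr)
    have h2 : (1 / 2 : ℝ) ^ a ≤ (1 / 2 : ℝ) ^ m :=
      pow_le_pow_of_le_one (by norm_num) (by norm_num) (hm a (Finset.mem_insert_self _ _))
    calc _ ≤ (1 / 2 : ℝ) ^ a + 1 / (1 - (1 / 2 : ℝ) ^ g) * (1 / 2 : ℝ) ^ (a + g) := by gcongr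
      _ = 1 / (1 - (1 / 2 : ℝ) ^ g) * (1 / 2 : ℝ) ^ a := by
        rw [pow_add]; field_simp; ring
      _ ≤ _ := by gcongr

/-! ### Overlaps of the two halves of an extended word -/

/-- If the halves `x = P·(w without its last t letters)` and `y = B·S` of the word `P·w·S`
overlap in `j ≥ 1` letters, then `j` is in `R_t(w)` and the first `j - t` letters of `S` are
determined by `w`. -/
lemma overlap_mem_Rt {α : Type*} {D t j : ℕ} {w P S : List α} (hw : w.length = D + 1)
    (hub : Unbordered w) (hsf : SquareFree w) (ht1 : 1 ≤ t) (ht2 : 2 * t ≤ D + 1)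
    (hP : P.length = t - 1) (hS : S.length = D - t) (hj1 : 1 ≤ j) (hjD : j ≤ D)
    (h : (P ++ w.take (D + 1 - t)).drop (D - j) = (w.drop (D + 1 - t) ++ S).take j) :
    j ∈ Rt w t ∧ (w.take (D + 1 - t)).drop (D + 1 - j) <+: S := by
  have hB : (w.drop (D + 1 - t)).length = t := by simp [hw]; omega
  have ha : (w.take (D + 1 - t)).length = D + 1 - t := by simp [hw]
  -- a border of length `D - j + 1` appears as soon as the overlap reaches the start of `w`
  have hj2 : j ≤ D - t := by
    by_contra hc
    have h1 := congrArg (fun l => (l.take t).drop (t - 1 - (D - j))) h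
    simp only [List.take_take] at h1
    rw [min_eq_left (by omega), List.take_append_of_le_length hB.ge,
      List.take_of_length_le hB.le, List.drop_take, List.drop_drop,
      show D - j + (t - 1 - (D - j)) = P.length by omega, List.drop_left,
      List.take_take, List.drop_drop] at h1
    refine hub ⟨D - j + 1, by omega, by omega, ?_⟩
    rw [hw, show D + 1 - (D - j + 1) = D + 1 - t + (t - 1 - (D - j)) by omega, ← h1]
    congr 1; omega
  rw [List.drop_append, List.drop_of_length_le (by omega), List.nil_append] at h
  rcases le_or_gt j t with hjt | hjt
  · exfalso
    -- the overlapping block and its copy both lie inside `w`, next to each other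
    rw [List.take_append_of_le_length (by omega)] at h
    refine hsf ⟨(w.drop (D + 1 - t)).take j, ?_, ?_⟩
    · intro h0
      have := congrArg List.length h0
      simp [hw] at this; omega
    · nth_rw 1 [← h]
      refine ⟨w.take (D + 1 - t - j), (w.drop (D + 1 - t)).drop j, ?_⟩
      rw [List.append_assoc, List.append_assoc, List.take_append_drop,
        show D - j - P.length = D + 1 - t - j by omega]
      rw [show w.take (D + 1 - t - j) = (w.take (D + 1 - t)).take (D + 1 - t - j) by
        rw [List.take_take, min_eq_left (by omega)], ← List.append_assoc, List.take_append_drop,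
        List.take_append_drop]
  · rw [show D - j - P.length = D + 1 - t - j by omega,
      List.take_append, List.take_of_length_le (l := w.drop (D + 1 - t)) (by omega), hB] at h
    have h2 := congrArg (List.drop t) h
    rw [List.drop_drop, List.drop_append, List.drop_of_length_le hB.le, hB,
      show D + 1 - t - j + t = D + 1 - j by omega] at h2
    simp only [Nat.sub_self, List.drop_zero, List.nil_append] at h2
    rw [h2]
    refine ⟨Finset.mem_filter.2 ⟨Finset.mem_Icc.2 ⟨hjt, by omega⟩,
      w.take (D + 1 - t - j), S.take (j - t), ?_, ?_, ?_⟩, List.take_prefix _ _⟩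
    · intro h0
      have := congrArg List.length h0
      rw [List.length_take, List.length_nil, hS] at this; omega
    · rw [suffixWord, hw, List.append_assoc (w.take _), ← h,
        show w.take (D + 1 - t - j) = (w.take (D + 1 - t)).take (D + 1 - t - j) by
          rw [List.take_take, min_eq_left (by omega)], List.take_append_drop,
        List.take_append_drop]
    · simp; omega

/-- The union bound over the possible overlap lengths. Extensions of `w` are encoded as pairs
`(P, S)`, with the left extension `P` read backwards from the first letter of `w`. -/
lemma pow_le_N_add {D : ℕ} (e : Edge 2 D) (hub : Unbordered e.word) (hsf : SquareFree e.word)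
    (t : ℕ) (ht1 : 1 ≤ t) (ht2 : 2 * t ≤ D + 1) :
    2 ^ (D - 1) ≤ N e D t + ∑ r ∈ Rt e.word t, 2 ^ (t - 1) * 2 ^ (D - r) := by
  obtain ⟨hl, hc, hsrc, htgt⟩ := e.word_spec (by omega)
  set w := e.word with hwdef
  have hne : w ≠ [] := by rintro h; simp [h] at hl
  obtain ⟨a, m, hwa⟩ := List.exists_cons_of_ne_nil hne
  obtain ⟨m', b, hwb⟩ : ∃ m' b, w = m' ++ [b] :=
    ⟨w.dropLast, w.getLast hne, (List.dropLast_append_getLast hne).symm⟩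
  let T := ext (t - 1) a ×ˢ ext (D - t) b
  let Bad := (Rt w t).biUnion fun r => ext (t - 1) a ×ˢ
    (ext (D - t) b).filter ((w.take (D + 1 - t)).drop (D + 1 - r) <+: ·)
  let φ : List (Fin 3) × List (Fin 3) → List (Fin 3) := fun q => q.1.reverse ++ w ++ q.2
  have hT : T.card = 2 ^ (D - 1) := by
    rw [Finset.card_product, card_ext, card_ext, ← pow_add]; congr 1; omega
  have hBad : Bad.card ≤ ∑ r ∈ Rt w t, 2 ^ (t - 1) * 2 ^ (D - r) := by
    refine Finset.card_biUnion_le.trans (Finset.sum_le_sum fun r hr => ?_)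
    rw [Finset.card_product, card_ext]
    refine Nat.mul_le_mul_left _ ((card_ext_prefix _ _ _).trans
      (Nat.pow_le_pow_right (by norm_num) ?_))
    have := Rt_occ hr
    simp [hl]; omega
  have hφ : Set.InjOn φ T := by
    rintro ⟨P, S⟩ h ⟨P', S'⟩ h' heq
    simp only [T, Finset.coe_product, Set.mem_prod, Finset.mem_coe, mem_ext] at h h'
    simp only [φ, List.append_assoc] at heq
    obtain ⟨h1, h2⟩ := List.append_inj heq (by simp; omega)
    rw [List.append_cancel_left h2, List.reverse_injective h1]
  have hN : (T \ Bad).card ≤ N e D t := by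
    rw [← Finset.card_image_of_injOn (hφ.mono (by simp)), ← Set.ncard_coe_finset]
    rw [N]
    refine (Set.ncard_le_ncard (t := Set.image (fun xy : Vertex 2 D × Vertex 2 D =>
      xy.1.word ++ xy.2.word) _) ?_ (Set.toFinite _)).trans (Set.ncard_image_le (Set.toFinite _))
    intro W hW
    obtain ⟨⟨P, S⟩, hPS, rfl⟩ := Finset.mem_image.1 (Finset.mem_coe.1 hW)
    obtain ⟨hPST, hPSB⟩ := Finset.mem_sdiff.1 hPS
    obtain ⟨hP, hS⟩ := Finset.mem_product.1 hPST
    obtain ⟨hPl, hPc⟩ := mem_ext.1 hP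
    obtain ⟨hSl, hSc⟩ := mem_ext.1 hS
    simp only at hP hS hPl hPc hSl hSc
    have hPl' : P.reverse.length = t - 1 := by simpa using hPl
    have hchain : (P.reverse ++ w ++ S).IsChain (· ≠ ·) := by
      have h1 : (P.reverse ++ [a]).IsChain (· ≠ ·) := by
        rw [← List.reverse_cons, List.isChain_reverse]
        exact hPc.imp fun _ _ h => h.symm
      have h2 : (P.reverse ++ w).IsChain (· ≠ ·) := by
        have := h1.append_overlap (l₃ := m) (by simpa [← hwa] using hc) (by simp)
        simpa [hwa] using this
      rw [hwb, ← List.append_assoc] at h2 ⊢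
      exact h2.append_overlap hSc (by simp)
    obtain ⟨p, x, y, hx, hy, hp, hpl, hpv⟩ := exists_walk (D := D) _
      (by simp [hPl, hSl, hl]; omega) hchain
    have hW : P.reverse ++ w ++ S
        = (P.reverse ++ w.take (D + 1 - t)) ++ (w.drop (D + 1 - t) ++ S) := by
      rw [List.append_assoc, List.append_assoc, ← List.append_assoc (w.take _),
        List.take_append_drop]
    have hxl : (P.reverse ++ w.take (D + 1 - t)).length = D := by
      simp [hPl, hl]; omega
    have hx' : x.word = P.reverse ++ w.take (D + 1 - t) := by
      rw [hx, hW, List.take_left' hxl]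
    have hy' : y.word = w.drop (D + 1 - t) ++ S := by
      rw [hy, hW, List.drop_left' hxl]
    refine ⟨(x, y), ⟨?_, p, hp, hpl, ?_, ?_⟩, by simp [hx, hy, φ]⟩
    · refine le_antisymm (Nat.sInf_le ⟨p, hp, hpl⟩) (le_csInf ⟨D, p, hp, hpl⟩ ?_)
      rintro k ⟨q, hq, hql⟩
      by_contra hk
      have hov := overlap_of_walk k q x y hq hql
      rw [hx', hy'] at hov
      obtain ⟨h1, h2⟩ := overlap_mem_Rt (j := D - k) hl hub hsf ht1 ht2 hPl' hSl (by omega)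
        (by omega) (by rwa [show D - (D - k) = k by omega])
      exact hPSB (Finset.mem_biUnion.2 ⟨D - k, h1, Finset.mem_product.2
        ⟨hP, Finset.mem_filter.2 ⟨hS, h2⟩⟩⟩)
    · obtain ⟨v, hv1, hv2⟩ := hpv (t - 1) (by omega)
      rw [hv1]
      congr 1
      apply Vertex.ext_word
      rw [hv2, hsrc, List.append_assoc, List.drop_left' hPl', List.take_append_of_le_length
        (by omega)]
    · obtain ⟨v, hv1, hv2⟩ := hpv t (by omega)
      rw [hv1]
      congr 1
      apply Vertex.ext_word
      rw [hv2, htgt, List.append_assoc, show t = t - 1 + 1 by omega, ← List.drop_drop,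
        List.drop_left' hPl', List.drop_append_of_le_length (by omega),
        List.take_left' (by simp [hl])]
  have h1 := Finset.le_card_sdiff Bad T
  omega

end Kautz

/-- If `e` is a directed edge of `K(2,D)` whose edge-word is unbordered and
square-free, `1 ≤ t`, `2t ≤ D+1`, and `R_t(w(e))` is nonempty with minimum
`r₀`, then `Δ_t(e) ≤ (1/(1 − 2^{−(t+1)}))·2^{D−1−r₀+t}`. -/
theorem statement13 (D : ℕ) (e : Kautz.Edge 2 D)
    (hub : Kautz.Unbordered e.word) (hsf : Kautz.SquareFree e.word)
    (t : ℕ) (ht1 : 1 ≤ t) (ht2 : 2 * t ≤ D + 1)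
    (hne : (Kautz.Rt e.word t).Nonempty) :
    Kautz.deficit e t
      ≤ (1 / (1 - (2 : ℝ) ^ (-((t : ℤ) + 1)))) *
          (2 : ℝ) ^ ((D : ℤ) - 1 - (((Kautz.Rt e.word t).min' hne : ℤ)) + (t : ℤ)) := by
  have hgeom := Kautz.sum_gap (t + 1) (by omega) (Kautz.Rt e.word t)
    (fun r hr r' hr' => Kautz.Rt_gap hsf hr hr') ((Kautz.Rt e.word t).min' hne)
    (fun r hr => Finset.min'_le _ r hr)
  have hcount := Kautz.pow_le_N_add e hub hsf t ht1 ht2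
  have hlen := (e.word_spec (by omega)).1
  generalize (Kautz.Rt e.word t).min' hne = r₀ at *
  have hsum : ((∑ r ∈ Kautz.Rt e.word t, 2 ^ (t - 1) * 2 ^ (D - r) : ℕ) : ℝ)
      = 2 ^ (D + t - 1) * ∑ r ∈ Kautz.Rt e.word t, (1 / 2 : ℝ) ^ r := by
    push_cast
    rw [Finset.mul_sum]
    refine Finset.sum_congr rfl fun r hr => ?_
    have := Kautz.Rt_occ hr
    rw [← pow_add, show D + t - 1 = t - 1 + (D - r) + r by omega, pow_add _ _ r, one_div,
      inv_pow, mul_assoc, mul_inv_cancel₀ (by positivity), mul_one]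
  have hcount' : (2 : ℝ) ^ (D - 1) ≤ Kautz.N e D t
      + 2 ^ (D + t - 1) * ∑ r ∈ Kautz.Rt e.word t, (1 / 2 : ℝ) ^ r := by
    rw [← hsum]; exact_mod_cast hcount
  have e1 : (2 : ℝ) ^ (-((t : ℤ) + 1)) = (1 / 2 : ℝ) ^ (t + 1) := by
    rw [zpow_neg, one_div, inv_pow]; norm_cast
  have e2 : (2 : ℝ) ^ ((D : ℤ) - 1 - (r₀ : ℤ) + (t : ℤ))
      = 2 ^ (D + t - 1) * (1 / 2 : ℝ) ^ r₀ := by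
    rw [show (D : ℤ) - 1 - (r₀ : ℤ) + (t : ℤ) = ((D + t - 1 : ℕ) : ℤ) - (r₀ : ℤ) by omega,
      zpow_sub₀ two_ne_zero, zpow_natCast, zpow_natCast, one_div, inv_pow, div_eq_mul_inv]
  rw [e1, e2]
  calc Kautz.deficit e t ≤ 2 ^ (D + t - 1) * ∑ r ∈ Kautz.Rt e.word t, (1 / 2 : ℝ) ^ r := by
        rw [Kautz.deficit]; push_cast; linarith
    _ ≤ 2 ^ (D + t - 1) * (1 / (1 - (1 / 2 : ℝ) ^ (t + 1)) * (1 / 2 : ℝ) ^ r₀) := by gcongr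
    _ = _ := by ring
end
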